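/- Let K be an algebraically closed field of characteristic 0, let f and g be nonconstant, relatively prime polynomials in K[t], set A = f² − g², B = 2fg, C = f² + g², and let w ∈ K[t] be a nonzero polynomial. If m and n are positive integers with m ≤ n such that (wA)^n = (wC)^m − (wB)^m, then m ≤ 2. -/

import Mathlib

/-!
Write `A = f ^ 2 - g ^ 2`, `B = 2 * f * g`, `C = f ^ 2 + g ^ 2`, so that `A = (f - g) * (f + g)`,
`C - B = (f - g) ^ 2` and `C + B = (f + g) ^ 2`. Cancelling `w ^ m` shows that `A ^ n` divides
`C ^ m - B ^ m`, so for `m ≥ 3` so do `(f - g) ^ 3` and `(f + g) ^ 3`. Of the three factors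
`f - g`, only two are accounted for by `C - B`; the third divides the cofactor
`∑ C ^ i * B ^ (m - 1 - i)`, which is `m * B ^ (m - 1)` modulo `f - g`. As `f - g` is coprime to
`f * g`, it divides the constant `m * 2 ^ (m - 1)`. For even `m` the sign change `g ↦ -g` gives the
same for `f + g`; for odd `m` already `f + g` divides `C ^ m + B ^ m`, hence `2 * B ^ m`.
Thus `f - g` and `f + g` are constant, and so are `f` and `g`.
-/

open Polynomial

section CommRing

variable {R : Type*} [CommRing R] {f g : R} {m : ℕ}

theorem isCoprime_add_mul (hfg : IsCoprime f g) : IsCoprime (f + g) (f * g) :=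
  IsCoprime.mul_right (by simpa [add_comm] using hfg.symm.add_mul_left_left 1)
    (by simpa using hfg.add_mul_left_left 1)

theorem isCoprime_sub_mul (hfg : IsCoprime f g) : IsCoprime (f - g) (f * g) := by
  simpa only [← sub_eq_add_neg, mul_neg, IsCoprime.neg_right_iff] using
    isCoprime_add_mul hfg.neg_right

theorem pow_dvd_pow_sub_pow_of_mul_pow_eq [NoZeroDivisors R] {w a b c : R} {n : ℕ} (hw : w ≠ 0)
    (hmn : m ≤ n) (h : (w * a) ^ n = (w * b) ^ m - (w * c) ^ m) : a ^ n ∣ b ^ m - c ^ m := by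
  have hdvd : w ^ m * a ^ n ∣ w ^ m * (b ^ m - c ^ m) := by
    rw [mul_sub, ← mul_pow, ← mul_pow, ← h, mul_pow]
    exact mul_dvd_mul_right (pow_dvd_pow w hmn) _
  exact (mul_dvd_mul_iff_left (pow_ne_zero m hw)).1 hdvd

theorem sub_dvd_natCast_mul_two_pow [NoZeroDivisors R] (hfg : IsCoprime f g) (hne : f - g ≠ 0)
    (h : (f - g) ^ 3 ∣ (f ^ 2 + g ^ 2) ^ m - (2 * f * g) ^ m) :
    f - g ∣ (m : R) * 2 ^ (m - 1) := by
  have hsq : f ^ 2 + g ^ 2 - 2 * f * g = (f - g) ^ 2 := by ring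
  have hcofactor :
      f - g ∣ ∑ i ∈ Finset.range m, (f ^ 2 + g ^ 2) ^ i * (2 * f * g) ^ (m - 1 - i) := by
    rwa [← (Commute.all _ _).mul_geom_sum₂, hsq, pow_succ,
      mul_dvd_mul_iff_left (pow_ne_zero 2 hne)] at h
  have hprod : f - g ∣ (m : R) * 2 ^ (m - 1) * (f * g) ^ (m - 1) := by
    rw [mul_assoc, ← mul_pow, ← mul_assoc 2]
    exact (dvd_geom_sum₂_iff_of_dvd_sub (hsq ▸ dvd_pow_self _ two_ne_zero)).1 hcofactor
  exact (isCoprime_sub_mul hfg).pow_right.dvd_of_dvd_mul_right hprod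

theorem add_dvd_two_pow_of_odd (hfg : IsCoprime f g) (hm : Odd m)
    (h : f + g ∣ (f ^ 2 + g ^ 2) ^ m - (2 * f * g) ^ m) : f + g ∣ 2 ^ (m + 1) := by
  have hsum : f + g ∣ (f ^ 2 + g ^ 2) ^ m + (2 * f * g) ^ m :=
    calc f + g ∣ (f + g) ^ 2 := dvd_pow_self _ two_ne_zero
      _ = f ^ 2 + g ^ 2 + 2 * f * g := by ring
      _ ∣ _ := hm.add_dvd_pow_add_pow _ _
  have hprod : f + g ∣ 2 ^ (m + 1) * (f * g) ^ m := by
    convert dvd_sub hsum h using 1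
    ring
  exact (isCoprime_add_mul hfg).pow_right.dvd_of_dvd_mul_right hprod

end CommRing

section Polynomial

variable {R : Type*} [CommRing R] [NoZeroDivisors R] {f g : R[X]} {m : ℕ}

theorem natDegree_eq_zero_of_dvd_natCast {p : R[X]} {k : ℕ} (hk : (k : R) ≠ 0)
    (h : p ∣ (k : R[X])) : p.natDegree = 0 := by
  have hk' : (k : R[X]) ≠ 0 := by rwa [← C_eq_natCast, C_ne_zero]
  simpa only [natDegree_natCast, Nat.le_zero] using natDegree_le_of_dvd h hk'

theorem natDegree_sub_eq_zero_of_cube_dvd (h2 : (2 : R) ≠ 0) (hm : (m : R) ≠ 0)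
    (hfg : IsCoprime f g) (h : (f - g) ^ 3 ∣ (f ^ 2 + g ^ 2) ^ m - (2 * f * g) ^ m) :
    (f - g).natDegree = 0 := by
  rcases eq_or_ne (f - g) 0 with hzero | hne
  · rw [hzero, natDegree_zero]
  · apply natDegree_eq_zero_of_dvd_natCast (k := m * 2 ^ (m - 1))
    · push_cast
      exact mul_ne_zero hm (pow_ne_zero _ h2)
    · exact_mod_cast sub_dvd_natCast_mul_two_pow hfg hne h

theorem natDegree_add_eq_zero_of_cube_dvd (h2 : (2 : R) ≠ 0) (hm : (m : R) ≠ 0)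
    (hfg : IsCoprime f g) (h : (f + g) ^ 3 ∣ (f ^ 2 + g ^ 2) ^ m - (2 * f * g) ^ m) :
    (f + g).natDegree = 0 := by
  rcases m.even_or_odd with heven | hodd
  · rw [← sub_neg_eq_add] at h ⊢
    apply natDegree_sub_eq_zero_of_cube_dvd h2 hm hfg.neg_right
    rwa [neg_sq, mul_neg, heven.neg_pow]
  · apply natDegree_eq_zero_of_dvd_natCast (k := 2 ^ (m + 1))
    · exact_mod_cast pow_ne_zero (m + 1) h2
    · exact_mod_cast add_dvd_two_pow_of_odd hfg hodd ((dvd_pow_self _ three_ne_zero).trans h)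

theorem natDegree_eq_zero_of_natDegree_sub_of_natDegree_add (h2 : (2 : R) ≠ 0)
    (hsub : (f - g).natDegree = 0) (hadd : (f + g).natDegree = 0) : f.natDegree = 0 := by
  have htwo : C (2 : R) * f = (f - g) + (f + g) := by
    rw [C_ofNat]
    ring
  rw [← natDegree_C_mul h2, htwo, ← Nat.le_zero]
  exact natDegree_add_le_of_degree_le hsub.le hadd.le

theorem jesmanowicz_poly_two_equal_exp_general (f g w : R[X])
    (hdeg : f.natDegree ≠ 0 ∨ g.natDegree ≠ 0) (hfg : IsCoprime f g) (hw : w ≠ 0) (m n : ℕ)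
    (h2 : (2 : R) ≠ 0) (hm : (m : R) ≠ 0) (hmn : m ≤ n)
    (heq : (w * (f ^ 2 - g ^ 2)) ^ n =
      (w * (f ^ 2 + g ^ 2)) ^ m - (w * (2 * f * g)) ^ m) :
    m ≤ 2 := by
  by_contra! hm3
  have hdvd : (f + g) ^ 3 * (f - g) ^ 3 ∣ (f ^ 2 + g ^ 2) ^ m - (2 * f * g) ^ m := by
    rw [← mul_pow, ← sq_sub_sq]
    exact (pow_dvd_pow _ (hm3.trans_le hmn)).trans (pow_dvd_pow_sub_pow_of_mul_pow_eq hw hmn heq)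
  have hsub : (f - g).natDegree = 0 :=
    natDegree_sub_eq_zero_of_cube_dvd h2 hm hfg (dvd_of_mul_left_dvd hdvd)
  have hadd : (f + g).natDegree = 0 :=
    natDegree_add_eq_zero_of_cube_dvd h2 hm hfg (dvd_of_mul_right_dvd hdvd)
  rcases hdeg with hf | hg
  · exact hf (natDegree_eq_zero_of_natDegree_sub_of_natDegree_add h2 hsub hadd)
  · rw [natDegree_sub] at hsub
    rw [add_comm] at hadd
    exact hg (natDegree_eq_zero_of_natDegree_sub_of_natDegree_add h2 hsub hadd)

end Polynomial

theorem jesmanowicz_poly_two_equal_exp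
    {K : Type*} [Field K] [CharZero K] [IsAlgClosed K]
    (f g w : K[X])
    (hf : 0 < f.natDegree) (hg : 0 < g.natDegree)
    (hfg : IsCoprime f g) (hw : w ≠ 0)
    (m n : ℕ) (hm : 0 < m) (hmn : m ≤ n)
    (heq : (w * (f ^ 2 - g ^ 2)) ^ n =
      (w * (f ^ 2 + g ^ 2)) ^ m - (w * (2 * f * g)) ^ m) :
    m ≤ 2 :=
  jesmanowicz_poly_two_equal_exp_general f g w (.inl hf.ne') hfg hw m n two_ne_zero
    (Nat.cast_ne_zero.2 hm.ne') hmn heq
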